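/- arXiv:1412.1332 — 2 statements merged into one kernel-verified Lean document; each statement's English description precedes it below -/
import Mathlib

section
/- Let d ≥ 1 and let n : ℝ^d → ℝ be a C^∞ function with n(x) > 0 for every x. Then for every x ∈ ℝ^d and every index i ∈ {1,…,d}, one has the Bohm-potential identity Σ_{j=1}^d ∂_j( n · ∂_i ∂_j (log n) )(x) = 2 n(x) · ∂_i( (Δ√n) / √n )(x); that is, div( n ∇² log n ) = 2 n ∇( Δ√n / √n ) pointwise. -/
/-- The `i`-th partial derivative of `f : ℝ^d → ℝ`. -/
noncomputable def pd {d : ℕ} (i : Fin d) (f : (Fin d → ℝ) → ℝ) (x : Fin d → ℝ) : ℝ :=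
  fderiv ℝ f x (Pi.single i 1)

lemma pd_contDiff {d : ℕ} (i : Fin d) {f : (Fin d → ℝ) → ℝ}
    (hf : ContDiff ℝ (⊤ : ℕ∞) f) : ContDiff ℝ (⊤ : ℕ∞) (pd i f) := by
  have h : ContDiff ℝ (⊤ : ℕ∞) (fderiv ℝ f) := hf.fderiv_right (by simp)
  exact h.clm_apply contDiff_const

lemma sm_diff {d : ℕ} {f : (Fin d → ℝ) → ℝ}
    (hf : ContDiff ℝ (⊤ : ℕ∞) f) (x : Fin d → ℝ) : DifferentiableAt ℝ f x :=
  (hf.differentiable (by simp)) x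

lemma pd_mul {d : ℕ} (i : Fin d) {f g : (Fin d → ℝ) → ℝ}
    (hf : ContDiff ℝ (⊤ : ℕ∞) f) (hg : ContDiff ℝ (⊤ : ℕ∞) g) (x : Fin d → ℝ) :
    pd i (fun y => f y * g y) x = pd i f x * g x + f x * pd i g x := by
  unfold pd
  rw [fderiv_fun_mul (sm_diff hf x) (sm_diff hg x)]
  simp
  ring

lemma pd_add {d : ℕ} (i : Fin d) {f g : (Fin d → ℝ) → ℝ}
    (hf : ContDiff ℝ (⊤ : ℕ∞) f) (hg : ContDiff ℝ (⊤ : ℕ∞) g) (x : Fin d → ℝ) :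
    pd i (fun y => f y + g y) x = pd i f x + pd i g x := by
  unfold pd
  rw [fderiv_fun_add (sm_diff hf x) (sm_diff hg x)]
  simp

lemma pd_const_mul {d : ℕ} (i : Fin d) (c : ℝ) {f : (Fin d → ℝ) → ℝ}
    (hf : ContDiff ℝ (⊤ : ℕ∞) f) (x : Fin d → ℝ) :
    pd i (fun y => c * f y) x = c * pd i f x := by
  unfold pd
  rw [fderiv_const_mul (sm_diff hf x)]
  simp

lemma pd_sum {d : ℕ} (i : Fin d) {f : Fin d → (Fin d → ℝ) → ℝ}
    (hf : ∀ j, ContDiff ℝ (⊤ : ℕ∞) (f j)) (x : Fin d → ℝ) :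
    pd i (fun y => ∑ j, f j y) x = ∑ j, pd i (f j) x := by
  unfold pd
  rw [fderiv_fun_sum (fun j _ => sm_diff (hf j) x)]
  simp

lemma pd_exp {d : ℕ} (i : Fin d) {f : (Fin d → ℝ) → ℝ}
    (hf : ContDiff ℝ (⊤ : ℕ∞) f) (x : Fin d → ℝ) :
    pd i (fun y => Real.exp (f y)) x = Real.exp (f x) * pd i f x := by
  unfold pd
  rw [fderiv_exp (sm_diff hf x)]
  simp

lemma pd_comm {d : ℕ} (i j : Fin d) {f : (Fin d → ℝ) → ℝ}
    (hf : ContDiff ℝ (⊤ : ℕ∞) f) (x : Fin d → ℝ) :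
    pd i (pd j f) x = pd j (pd i f) x := by
  have h : ContDiff ℝ (⊤ : ℕ∞) (fderiv ℝ f) := hf.fderiv_right (by simp)
  have hd : DifferentiableAt ℝ (fderiv ℝ f) x := (h.differentiable (by simp)) x
  have key : ∀ k l : Fin d, pd k (pd l f) x
      = fderiv ℝ (fderiv ℝ f) x (Pi.single k 1) (Pi.single l 1) := by
    intro k l
    change fderiv ℝ (fun y => fderiv ℝ f y (Pi.single l 1)) x (Pi.single k 1) = _
    rw [fderiv_clm_apply hd (differentiableAt_const _)]
    simp
  rw [key, key]
  have hs : IsSymmSndFDerivAt ℝ f x :=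
    hf.contDiffAt.isSymmSndFDerivAt (by
      rw [minSmoothness_of_isRCLikeNormedField]
      exact WithTop.coe_le_coe.2 (le_top : (2 : ℕ∞) ≤ ⊤))
  exact hs _ _

/-- Bohm-potential identity: `div(n ∇² log n) = 2 n ∇(Δ√n/√n)` pointwise, for smooth
positive `n : ℝ^d → ℝ`. -/
theorem bohm_identity (d : ℕ) (hd : 1 ≤ d) (n : (Fin d → ℝ) → ℝ)
    (hn : ContDiff ℝ (⊤ : ℕ∞) n) (hpos : ∀ x, 0 < n x) :
    ∀ (x : Fin d → ℝ) (i : Fin d),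
      (∑ j : Fin d,
          pd j (fun y => n y * pd i (pd j (fun z => Real.log (n z))) y) x)
        = 2 * n x *
            pd i (fun y =>
              (∑ j : Fin d, pd j (pd j (fun z => Real.sqrt (n z))) y) / Real.sqrt (n y)) x := by
  intro x i
  obtain ⟨L, hLdef⟩ : ∃ L : (Fin d → ℝ) → ℝ, L = fun z => Real.log (n z) := ⟨_, rfl⟩
  have hL : ContDiff ℝ (⊤ : ℕ∞) L := by
    rw [hLdef]; exact hn.log (fun y => (hpos y).ne')
  have hnL : n = fun y => Real.exp (L y) := by
    funext y; rw [hLdef]; exact (Real.exp_log (hpos y)).symm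
  have hH : ContDiff ℝ (⊤ : ℕ∞) (fun y => (1 / 2 : ℝ) * L y) := contDiff_const.mul hL
  have hS : (fun z => Real.sqrt (n z)) = fun y => Real.exp ((1 / 2 : ℝ) * L y) := by
    funext y
    rw [hnL, Real.sqrt_eq_iff_mul_self_eq (Real.exp_pos _).le (Real.exp_pos _).le,
      ← Real.exp_add]
    congr 1; ring
  have hpS : ∀ j : Fin d, pd j (fun y => Real.exp ((1 / 2 : ℝ) * L y))
      = fun y => Real.exp ((1 / 2 : ℝ) * L y) * ((1 / 2 : ℝ) * pd j L y) := by
    intro j; funext y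
    rw [pd_exp j hH, pd_const_mul j _ hL]
  have hQ : (fun y => (∑ j : Fin d, pd j (pd j (fun z => Real.sqrt (n z))) y) / Real.sqrt (n y))
      = fun y => ∑ j : Fin d, ((1 / 4 : ℝ) * (pd j L y * pd j L y)
          + (1 / 2 : ℝ) * pd j (pd j L) y) := by
    funext y
    have e : Real.sqrt (n y) = Real.exp ((1 / 2 : ℝ) * L y) := congrFun hS y
    rw [hS, e, div_eq_iff (Real.exp_pos _).ne', Finset.sum_mul]
    refine Finset.sum_congr rfl fun j _ => ?_
    have hpj := pd_contDiff j hL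
    rw [hpS j, pd_mul j hH.exp (contDiff_const.mul hpj), hpS j, pd_const_mul j _ hpj]
    ring
  have hp := fun j => pd_contDiff j hL
  have hpp := fun j k => pd_contDiff k (hp j)
  rw [hQ, pd_sum i (fun j => (contDiff_const.mul ((hp j).mul (hp j))).add
    (contDiff_const.mul (hpp j j))), Finset.mul_sum, ← hLdef]
  refine Finset.sum_congr rfl fun j _ => ?_
  rw [pd_mul j hn (hpp j i), pd_add i (contDiff_const.mul ((hp j).mul (hp j)))
    (contDiff_const.mul (hpp j j)), pd_const_mul i _ ((hp j).mul (hp j)),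
    pd_const_mul i _ (hpp j j), pd_mul i (hp j) (hp j), pd_comm j i (hp j)]
  have hnj : pd j n x = n x * pd j L x := by
    rw [hnL]; exact pd_exp j hL x
  rw [hnj]
  ring
end

section
/- Let d ≥ 1, ν, ε > 0, γ > 1, and let p_c : ℝ → ℝ be a C¹ function. Let n : ℝ × ℝ^d → ℝ and u : ℝ × ℝ^d → ℝ^d be C^∞ with n(t,x) > 0 for all (t,x), satisfying pointwise the continuity equation ∂_t n + div(n u) = 0 and the quantum Navier–Stokes momentum equation ∂_t (n u_i) + Σ_j ∂_j (n u_j u_i) + ∂_i ( n^γ + p_c(n) ) − 2 ε² n ∂_i( Δ√n / √n ) = 2 ν Σ_j ∂_j ( n D(u)_{ij} ) for each i, where D(u)_{ij} = (∂_i u_j + ∂_j u_i)/2. Then the effective velocity w = u + ν ∇ log n satisfies, pointwise for each i: ∂_t (n w_i) + Σ_j ∂_j ( n u_j w_i ) + ∂_i ( n^γ + p_c(n) ) − 2 ε² n ∂_i( Δ√n / √n ) = ν Σ_j ∂_j ( n ∂_j u_i ). -/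
/-- Time derivative of `f : ℝ × ℝ^d → ℝ`. -/
noncomputable def pdt {d : ℕ} (f : ℝ × (Fin d → ℝ) → ℝ) (p : ℝ × (Fin d → ℝ)) : ℝ :=
  fderiv ℝ f p (1, 0)

/-- The `i`-th spatial partial derivative of `f : ℝ × ℝ^d → ℝ`. -/
noncomputable def pdx {d : ℕ} (i : Fin d) (f : ℝ × (Fin d → ℝ) → ℝ)
    (p : ℝ × (Fin d → ℝ)) : ℝ :=
  fderiv ℝ f p (0, Pi.single i 1)

/-- Directional derivative, used for both `pdt` and `pdx`. -/
noncomputable def dirD {d : ℕ} (v : ℝ × (Fin d → ℝ)) (f : ℝ × (Fin d → ℝ) → ℝ)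
    (p : ℝ × (Fin d → ℝ)) : ℝ := fderiv ℝ f p v

theorem pdt_eq_dirD {d : ℕ} : (pdt : (ℝ × (Fin d → ℝ) → ℝ) → _ → ℝ) = dirD (1, 0) := rfl

theorem pdx_eq_dirD {d : ℕ} (i : Fin d) : pdx i = dirD (0, Pi.single i 1) := rfl

theorem dirD_smooth {d : ℕ} (v : ℝ × (Fin d → ℝ)) {f : ℝ × (Fin d → ℝ) → ℝ}
    (hf : ContDiff ℝ (⊤ : ℕ∞) f) : ContDiff ℝ (⊤ : ℕ∞) (dirD v f) := by
  have h : ContDiff ℝ (⊤ : ℕ∞) (fderiv ℝ f) := hf.fderiv_right (by simp)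
  exact h.clm_apply contDiff_const

theorem smooth_diff {d : ℕ} {f : ℝ × (Fin d → ℝ) → ℝ}
    (hf : ContDiff ℝ (⊤ : ℕ∞) f) : Differentiable ℝ f :=
  hf.differentiable (by simp)

theorem dirD_add {d : ℕ} (v p : ℝ × (Fin d → ℝ)) {f g : ℝ × (Fin d → ℝ) → ℝ}
    (hf : ContDiff ℝ (⊤ : ℕ∞) f) (hg : ContDiff ℝ (⊤ : ℕ∞) g) :
    dirD v (fun q => f q + g q) p = dirD v f p + dirD v g p := by
  unfold dirD
  rw [fderiv_fun_add (smooth_diff hf p) (smooth_diff hg p)]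
  rfl

theorem dirD_const_mul {d : ℕ} (v p : ℝ × (Fin d → ℝ)) (c : ℝ) {f : ℝ × (Fin d → ℝ) → ℝ}
    (hf : ContDiff ℝ (⊤ : ℕ∞) f) :
    dirD v (fun q => c * f q) p = c * dirD v f p := by
  unfold dirD
  rw [fderiv_const_mul (smooth_diff hf p)]
  rfl

theorem dirD_mul {d : ℕ} (v p : ℝ × (Fin d → ℝ)) {f g : ℝ × (Fin d → ℝ) → ℝ}
    (hf : ContDiff ℝ (⊤ : ℕ∞) f) (hg : ContDiff ℝ (⊤ : ℕ∞) g) :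
    dirD v (fun q => f q * g q) p = g p * dirD v f p + f p * dirD v g p := by
  unfold dirD
  rw [fderiv_fun_mul (smooth_diff hf p) (smooth_diff hg p)]
  simp [add_comm]

theorem dirD_sum {d : ℕ} (v p : ℝ × (Fin d → ℝ)) {f : Fin d → ℝ × (Fin d → ℝ) → ℝ}
    (hf : ∀ j, ContDiff ℝ (⊤ : ℕ∞) (f j)) :
    dirD v (fun q => ∑ j, f j q) p = ∑ j, dirD v (f j) p := by
  unfold dirD
  rw [fderiv_fun_sum (fun j _ => smooth_diff (hf j) p)]
  simp

theorem dirD_log {d : ℕ} (v p : ℝ × (Fin d → ℝ)) {f : ℝ × (Fin d → ℝ) → ℝ}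
    (hf : ContDiff ℝ (⊤ : ℕ∞) f) (h0 : f p ≠ 0) :
    f p * dirD v (fun q => Real.log (f q)) p = dirD v f p := by
  unfold dirD
  rw [fderiv.log (smooth_diff hf p) h0]
  simp [h0]

theorem dirD_comm {d : ℕ} (v w p : ℝ × (Fin d → ℝ)) {f : ℝ × (Fin d → ℝ) → ℝ}
    (hf : ContDiff ℝ (⊤ : ℕ∞) f) :
    dirD v (dirD w f) p = dirD w (dirD v f) p := by
  have h : ContDiff ℝ (⊤ : ℕ∞) (fderiv ℝ f) := hf.fderiv_right (by simp)
  have hd : DifferentiableAt ℝ (fderiv ℝ f) p := h.differentiable (by simp) p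
  have key : ∀ a b : ℝ × (Fin d → ℝ),
      dirD a (dirD b f) p = fderiv ℝ (fderiv ℝ f) p a b := by
    intro a b
    unfold dirD
    rw [fderiv_clm_apply hd (differentiableAt_const b)]
    simp
  rw [key, key]
  have hs : IsSymmSndFDerivAt ℝ f p := hf.contDiffAt.isSymmSndFDerivAt (by
    simp only [minSmoothness_of_isRCLikeNormedField]
    exact WithTop.coe_le_coe.2 (le_top : (2 : ℕ∞) ≤ ⊤))
  exact hs v w

/-- The momentum equation for the effective velocity `w = u + ν ∇ log n`: if `(n, u)` is a
smooth positive solution of the quantum Navier–Stokes system, then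
`∂_t(n w) + div(n u ⊗ w) + ∇(n^γ + p_c(n)) − 2ε² n ∇(Δ√n/√n) = ν div(n ∇u)` pointwise. -/
theorem effective_velocity_momentum (d : ℕ) (hd : 1 ≤ d) (ν ε γ : ℝ)
    (hν : 0 < ν) (hε : 0 < ε) (hγ : 1 < γ)
    (p_c : ℝ → ℝ) (hpc : ContDiff ℝ 1 p_c)
    (n : ℝ × (Fin d → ℝ) → ℝ) (u : ℝ × (Fin d → ℝ) → Fin d → ℝ)
    (hn : ContDiff ℝ (⊤ : ℕ∞) n) (hu : ContDiff ℝ (⊤ : ℕ∞) u)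
    (hpos : ∀ p, 0 < n p)
    (hcont : ∀ p, pdt n p + ∑ j : Fin d, pdx j (fun q => n q * u q j) p = 0)
    (hmom : ∀ (p : ℝ × (Fin d → ℝ)) (i : Fin d),
      pdt (fun q => n q * u q i) p
        + (∑ j : Fin d, pdx j (fun q => n q * u q j * u q i) p)
        + pdx i (fun q => n q ^ γ + p_c (n q)) p
        - 2 * ε ^ 2 * n p *
            pdx i (fun q =>
              (∑ j : Fin d, pdx j (pdx j (fun r => Real.sqrt (n r))) q)
                / Real.sqrt (n q)) p
        = 2 * ν * ∑ j : Fin d,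
            pdx j (fun q => n q *
              ((pdx i (fun r => u r j) q + pdx j (fun r => u r i) q) / 2)) p) :
    ∀ (p : ℝ × (Fin d → ℝ)) (i : Fin d),
      pdt (fun q => n q * (u q i + ν * pdx i (fun r => Real.log (n r)) q)) p
        + (∑ j : Fin d,
            pdx j (fun q =>
              n q * u q j * (u q i + ν * pdx i (fun r => Real.log (n r)) q)) p)
        + pdx i (fun q => n q ^ γ + p_c (n q)) p
        - 2 * ε ^ 2 * n p *
            pdx i (fun q =>
              (∑ j : Fin d, pdx j (pdx j (fun r => Real.sqrt (n r))) q)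
                / Real.sqrt (n q)) p
        = ν * ∑ j : Fin d, pdx j (fun q => n q * pdx j (fun r => u r i) q) p := by
  intro p i
  have hm := hmom p i
  simp only [pdt_eq_dirD, pdx_eq_dirD] at hm hcont ⊢
  have hui : ∀ j, ContDiff ℝ (⊤ : ℕ∞) (fun q => u q j) := fun j => contDiff_pi.1 hu j
  set e : Fin d → ℝ × (Fin d → ℝ) := fun j => (0, Pi.single j 1) with he
  change ∀ p, dirD (1, 0) n p + ∑ j, dirD (e j) (fun q => n q * u q j) p = 0 at hcont
  have hnu : ∀ j, ContDiff ℝ (⊤ : ℕ∞) (fun q => n q * u q j) := fun j => hn.mul (hui j)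
  have hni : ContDiff ℝ (⊤ : ℕ∞) (dirD (e i) n) := dirD_smooth _ hn
  have hlog : ∀ q, n q * dirD (e i) (fun r => Real.log (n r)) q = dirD (e i) n q :=
    fun q => dirD_log _ _ hn (hpos q).ne'
  -- the time derivative
  have h1 : dirD (1, 0) (fun q => n q * (u q i +
      ν * dirD (e i) (fun r => Real.log (n r)) q)) p
      = dirD (1, 0) (fun q => n q * u q i) p + ν * dirD (1, 0) (dirD (e i) n) p := by
    rw [← dirD_const_mul _ _ _ hni, ← dirD_add _ _ (hnu i) (contDiff_const.mul hni)]
    congr 1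
    funext q
    rw [← hlog q]
    ring
  -- the convective terms
  have h2 : ∀ j, dirD (e j) (fun q => n q * u q j * (u q i +
      ν * dirD (e i) (fun r => Real.log (n r)) q)) p
      = dirD (e j) (fun q => n q * u q j * u q i) p
        + ν * dirD (e j) (fun q => u q j * dirD (e i) n q) p := by
    intro j
    rw [← dirD_const_mul _ _ _ ((hui j).mul hni),
      ← dirD_add _ _ ((hnu j).mul (hui i)) (contDiff_const.mul ((hui j).mul hni))]
    congr 1
    funext q
    rw [← hlog q]
    ring
  -- the differentiated continuity equation
  have h3 : dirD (1, 0) (dirD (e i) n) p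
      = - ∑ j, (dirD (e j) (fun q => u q j * dirD (e i) n q) p
        + dirD (e j) (fun q => n q * dirD (e i) (fun r => u r j) q) p) := by
    have hc : dirD (1, 0) n
        = fun q => (-1) * ∑ j, dirD (e j) (fun q => n q * u q j) q := by
      funext q
      linarith [hcont q]
    rw [dirD_comm _ _ _ hn, hc, dirD_const_mul _ _ _
      (ContDiff.sum fun j _ => dirD_smooth (e j) (hnu j)),
      dirD_sum _ _ (fun j => dirD_smooth (e j) (hnu j)), neg_one_mul]
    congr 1
    refine Finset.sum_congr rfl fun j _ => ?_
    rw [dirD_comm _ _ _ (hnu j),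
      ← dirD_add _ _ ((hui j).mul hni) (hn.mul (dirD_smooth _ (hui j)))]
    congr 1
    funext q
    exact dirD_mul _ _ hn (hui j)
  -- the viscous term
  have h4 : ∀ j, dirD (e j) (fun q => n q *
      ((dirD (e i) (fun r => u r j) q + dirD (e j) (fun r => u r i) q) / 2)) p
      = (1 / 2) * (dirD (e j) (fun q => n q * dirD (e i) (fun r => u r j) q) p
        + dirD (e j) (fun q => n q * dirD (e j) (fun r => u r i) q) p) := by
    intro j
    have ha := hn.mul (dirD_smooth (e i) (hui j))
    have hb := hn.mul (dirD_smooth (e j) (hui i))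
    rw [← dirD_add _ _ ha hb, ← dirD_const_mul _ _ _ (ha.add hb)]
    congr 1
    funext q
    ring
  simp only [he] at h1 h2 h3 h4
  simp only [h4, ← Finset.mul_sum, Finset.sum_add_distrib] at hm
  simp only [h1, h2, h3, ← Finset.mul_sum, Finset.sum_add_distrib]
  linear_combination hm
end
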